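/- Let x₁ = (r,0,0), x₂ = (0,r,0), x₃ = (0,0,r) in ℝ³ with r > 0, and let c(x₁,x₂,x₃) = -det[x₁ x₂ x₃]. Then the 9×9 matrix Ḡ of mixed second partials ∂²c/∂x_i^α ∂x_j^β (i ≠ j, zero diagonal blocks), evaluated at (x₁,x₂,x₃), has exactly 5 positive eigenvalues and 4 negative eigenvalues (signature (5,4,0)). -/

import Mathlib

open Matrix

/-- The determinant cost: `c(x₁,x₂,x₃) = -det [x₁ x₂ x₃]`, where `x_i ∈ ℝ³`
are the columns. -/
noncomputable def detCost : (Fin 3 → Fin 3 → ℝ) → ℝ :=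
  fun x => -Matrix.det (Matrix.of fun α i => x i α)

/-- The `9 × 9` matrix of mixed second partials of `detCost` (zero diagonal
blocks), evaluated at the point `x`. -/
noncomputable def detCostG (x : Fin 3 → Fin 3 → ℝ) :
    Matrix (Fin 3 × Fin 3) (Fin 3 × Fin 3) ℝ :=
  fun p q => if p.1 = q.1 then 0 else
    iteratedFDeriv ℝ 2 detCost x
      ![Pi.single p.1 (Pi.single p.2 1), Pi.single q.1 (Pi.single q.2 1)]

/-- A directional derivative read off from a cubic expansion along the line. -/
lemma fderiv_of_cubic {f : (Fin 3 → Fin 3 → ℝ) → ℝ} (hf : Differentiable ℝ f)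
    (y v : Fin 3 → Fin 3 → ℝ) (a b c : ℝ)
    (h : ∀ t : ℝ, f (y + t • v) = f y + t * a + t ^ 2 * b + t ^ 3 * c) :
    fderiv ℝ f y v = a := by
  have h1 := (hf y).hasFDerivAt.hasLineDerivAt v
  unfold HasLineDerivAt at h1
  have h2 : HasDerivAt (fun t : ℝ => f (y + t • v)) a 0 := by
    simp_rw [h]
    have h3 := ((((hasDerivAt_id (0 : ℝ)).mul_const a).const_add (f y)).add
      (((hasDerivAt_id (0 : ℝ)).pow 2).mul_const b)).add
      (((hasDerivAt_id (0 : ℝ)).pow 3).mul_const c)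
    have h4 : a = 1 * a + ((2 : ℕ) * (0 : ℝ) ^ (2 - 1) * 1) * b
        + ((3 : ℕ) * (0 : ℝ) ^ (3 - 1) * 1) * c := by norm_num
    exact h3.congr_deriv h4.symm
  exact h1.unique h2

/-- Explicit determinant of three columns. -/
def tri (a b c : Fin 3 → ℝ) : ℝ :=
  a 0 * b 1 * c 2 - a 0 * c 1 * b 2 - b 0 * a 1 * c 2 + b 0 * c 1 * a 2
    + c 0 * a 1 * b 2 - c 0 * b 1 * a 2

lemma detCost_eq : detCost = fun y => -tri (y 0) (y 1) (y 2) := by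
  funext y
  simp [detCost, tri, Matrix.det_fin_three]

lemma detCost_smooth : ContDiff ℝ 2 detCost := by
  rw [detCost_eq]; unfold tri; fun_prop

lemma fderiv_detCost (y v : Fin 3 → Fin 3 → ℝ) :
    fderiv ℝ detCost y v =
      -(tri (v 0) (y 1) (y 2) + tri (y 0) (v 1) (y 2) + tri (y 0) (y 1) (v 2)) := by
  refine fderiv_of_cubic (detCost_smooth.differentiable (by norm_num)) y v _
    (-(tri (y 0) (v 1) (v 2) + tri (v 0) (y 1) (v 2) + tri (v 0) (v 1) (y 2)))
    (-tri (v 0) (v 1) (v 2)) ?_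
  intro t
  simp only [detCost_eq, tri, Pi.add_apply, Pi.smul_apply, smul_eq_mul]
  ring

lemma hess_detCost (y u v : Fin 3 → Fin 3 → ℝ) :
    iteratedFDeriv ℝ 2 detCost y ![u, v] =
      -(tri (v 0) (u 1) (y 2) + tri (v 0) (y 1) (u 2) + tri (u 0) (v 1) (y 2)
        + tri (y 0) (v 1) (u 2) + tri (u 0) (y 1) (v 2) + tri (y 0) (u 1) (v 2)) := by
  have hd : Differentiable ℝ (fderiv ℝ detCost) :=
    (detCost_smooth.fderiv_right (m := 1) (by norm_num)).differentiable (by norm_num)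
  rw [iteratedFDeriv_two_apply]
  simp only [Matrix.cons_val_zero, Matrix.cons_val_one]
  have h1 : fderiv ℝ (fderiv ℝ detCost) y u v
      = fderiv ℝ (fun z => fderiv ℝ detCost z v) y u := by
    rw [fderiv_clm_apply (hd y) (by fun_prop)]
    simp
  rw [h1]
  refine fderiv_of_cubic (by fun_prop) y u _
    (-(tri (v 0) (u 1) (u 2) + tri (u 0) (v 1) (u 2) + tri (u 0) (u 1) (v 2))) 0 ?_
  intro t
  simp only [fderiv_detCost, tri, Pi.add_apply, Pi.smul_apply, smul_eq_mul]
  ring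

/-- The sign pattern. -/
def pat : Matrix (Fin 3 × Fin 3) (Fin 3 × Fin 3) ℤ :=
  fun p q => if p.1 = q.1 then 0 else
    if p.2 = p.1 ∧ q.2 = q.1 then -1 else
    if p.2 = q.1 ∧ q.2 = p.1 then 1 else 0

lemma pat_trace : pat.trace = 0 := by decide +kernel

lemma pat_trace_sq : (pat * pat).trace = 12 := by decide +kernel

lemma trace_mapInt (A : Matrix (Fin 3 × Fin 3) (Fin 3 × Fin 3) ℤ) :
    ((Int.castRingHom ℝ).mapMatrix A).trace = (A.trace : ℝ) := by
  simp [Matrix.trace]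

lemma pat_poly : (pat * pat - 1) * (pat + 2) = 0 := by
  ext i j
  change _ = (0 : ℤ)
  revert i j
  decide +kernel

lemma detCostG_eq (r : ℝ) (x : Fin 3 → Fin 3 → ℝ)
    (hx : ∀ i α, x i α = if α = i then r else 0) :
    detCostG x = r • (Int.castRingHom ℝ).mapMatrix pat := by
  ext ⟨i, a⟩ ⟨j, b⟩
  simp only [detCostG, hess_detCost, Matrix.smul_apply, RingHom.mapMatrix_apply,
    Matrix.map_apply, pat, tri, hx]
  fin_cases i <;> fin_cases j <;> fin_cases a <;> fin_cases b <;> simp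

/-- Counting from power sums. -/
lemma count_of_sums (r : ℝ) (hr : 0 < r) (l : Fin 3 × Fin 3 → ℝ)
    (h1 : ∑ i, l i = 0) (h2 : ∑ i, l i * l i = 12 * r ^ 2)
    (h3 : ∀ i, (l i * l i - r ^ 2) * (l i + 2 * r) = 0) :
    (Finset.univ.filter fun p => 0 < l p).card = 5 ∧
    (Finset.univ.filter fun p => l p < 0).card = 4 := by
  have hc : ∀ i, l i = r ∨ l i = -r ∨ l i = -(2 * r) := by
    intro i
    rcases mul_eq_zero.mp (h3 i) with h | h
    · have : (l i - r) * (l i + r) = 0 := by linear_combination h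
      rcases mul_eq_zero.mp this with h | h
      · left; linarith
      · right; left; linarith
    · right; right; linarith
  have hp : ∀ i, (if 0 < l i then (1 : ℝ) else 0) * (6 * r ^ 2)
      = 2 * r ^ 2 * 1 + 3 * r * l i + l i * l i := by
    intro i
    rcases hc i with h | h | h
    · rw [if_pos (by linarith), h]; ring
    · rw [if_neg (by linarith), h]; ring
    · rw [if_neg (by linarith), h]; ring
  have hn : ∀ i, (if l i < 0 then (1 : ℝ) else 0) = 1 - (if 0 < l i then (1 : ℝ) else 0) := by
    intro i
    rcases hc i with h | h | h
    · rw [if_neg (by linarith), if_pos (by linarith)]; ring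
    · rw [if_pos (by linarith), if_neg (by linarith)]; ring
    · rw [if_pos (by linarith), if_neg (by linarith)]; ring
  have hP : (∑ i, (if 0 < l i then (1 : ℝ) else 0)) = 5 := by
    have h : (∑ i, (if 0 < l i then (1 : ℝ) else 0)) * (6 * r ^ 2) = 5 * (6 * r ^ 2) := by
      rw [Finset.sum_mul, Finset.sum_congr rfl (fun i _ => hp i), Finset.sum_add_distrib,
        Finset.sum_add_distrib, ← Finset.mul_sum, ← Finset.mul_sum, h1, h2]
      simp
      ring
    exact mul_right_cancel₀ (by positivity) h
  have hN : (∑ i, (if l i < 0 then (1 : ℝ) else 0)) = 4 := by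
    rw [Finset.sum_congr rfl (fun i _ => hn i), Finset.sum_sub_distrib, hP]
    simp
    norm_num
  rw [Finset.sum_boole] at hP hN
  exact ⟨by exact_mod_cast hP, by exact_mod_cast hN⟩

theorem stmt19 (r : ℝ) (hr : 0 < r)
    (x : Fin 3 → Fin 3 → ℝ) (hx : ∀ i α, x i α = if α = i then r else 0)
    (hG : (detCostG x).IsHermitian) :
    (Finset.univ.filter fun p : Fin 3 × Fin 3 => 0 < hG.eigenvalues p).card = 5 ∧
    (Finset.univ.filter fun p : Fin 3 × Fin 3 => hG.eigenvalues p < 0).card = 4 := by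
  have hM := detCostG_eq r x hx
  have t1 : (detCostG x).trace = 0 := by
    rw [hM, Matrix.trace_smul, trace_mapInt, pat_trace]
    simp
  have t2 : (detCostG x * detCostG x).trace = 12 * r ^ 2 := by
    rw [hM, smul_mul_smul_comm, ← map_mul, Matrix.trace_smul, trace_mapInt, pat_trace_sq]
    simp
    ring
  have t3 : (detCostG x * detCostG x - (r ^ 2) • 1) * (detCostG x + (2 * r) • 1) = 0 := by
    have h := congrArg (Int.castRingHom ℝ).mapMatrix pat_poly
    rw [map_mul, map_sub, map_add, map_mul, map_one, map_zero, map_ofNat] at h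
    have h2 : (2 : Matrix (Fin 3 × Fin 3) (Fin 3 × Fin 3) ℝ) = (2 : ℝ) • 1 := by
      rw [two_smul, one_add_one_eq_two]
    rw [h2] at h
    rw [hM]
    generalize (Int.castRingHom ℝ).mapMatrix pat = P at h
    have h4 : ((r • P) * (r • P) - (r ^ 2) • 1) * (r • P + (2 * r) • 1)
        = (r ^ 3) • ((P * P - 1) * (P + (2 : ℝ) • 1)) := by
      have e1 : (r • P) * (r • P) - (r ^ 2) • 1 = (r ^ 2) • (P * P - 1) := by
        rw [smul_mul_smul_comm, smul_sub, pow_two]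
      have e2 : r • P + (2 * r) • 1 = r • (P + (2 : ℝ) • 1) := by
        rw [smul_add, smul_smul, mul_comm]
      rw [e1, e2, smul_mul_smul_comm, ← pow_succ]
    rw [h4, h, smul_zero]
  have hs := hG.conjStarAlgAut_star_eigenvectorUnitary
  set e := Unitary.conjStarAlgAut ℝ (Matrix (Fin 3 × Fin 3) (Fin 3 × Fin 3) ℝ)
    (star hG.eigenvectorUnitary) with he
  have htr : ∀ A, (e A).trace = A.trace := by
    intro A
    rw [he, Unitary.conjStarAlgAut_star_apply, Matrix.trace_mul_comm, ← mul_assoc]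
    simp
  have hs' : e (detCostG x) = diagonal hG.eigenvalues := hs
  apply count_of_sums r hr
  · rw [← htr, hs', Matrix.trace_diagonal] at t1
    exact t1
  · rw [← htr, map_mul, hs', Matrix.diagonal_mul_diagonal, Matrix.trace_diagonal] at t2
    exact t2
  · intro i
    have h := congrArg e t3
    rw [map_mul, map_sub, map_add, map_mul, map_smul, map_smul, map_one, map_zero, hs',
      Matrix.diagonal_mul_diagonal, Matrix.smul_one_eq_diagonal, Matrix.smul_one_eq_diagonal,
      Matrix.diagonal_sub, Matrix.diagonal_add, Matrix.diagonal_mul_diagonal] at h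
    have h' := congrFun (congrFun h i) i
    simpa only [Matrix.diagonal_apply_eq, Matrix.zero_apply] using h'
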